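/- arXiv:0905.3954 — 4 statements merged into one kernel-verified Lean document; each statement's English description precedes it below -/
import Mathlib

section
/- Let c be a real number and let V be a finite subset of ℝ² such that every point of V with both coordinates integer lies on L_c ∪ L_{c+2}, and every point of V with at least one non-integer coordinate lies on some line L_{c'} with c < c' < c + 2. Let u and v be two points of V with both coordinates integer such that u₁ ≤ v₁, and suppose u₁ + 1 ≠ v₁ or u₂ − 1 ≠ v₂. Then u and v are not adjacent in the niche graph of the doubly partial order associated with V. -/
/-!
All of `V` lies in the closed strip between `L_c` and `L_{c+2}`. If `u` and `v` have a common prey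
`a`, then both lie strictly above `L_c`, hence on `L_{c+2}`; distinct integer points on the same
line that are not consecutive satisfy `u₁ + 2 ≤ v₁` (`add_two_le_of_same_line`), so
`a₁ + a₂ < u₁ + v₂ ≤ c`, which puts `a` outside the strip. A common predator is excluded
symmetrically, with `u` and `v` on `L_c` and `a₁ + a₂ > v₁ + u₂ ≥ c + 2`.
-/

/-- `x ≺ y` iff both coordinates of `x` are strictly smaller. -/
def prec (x y : ℝ × ℝ) : Prop := x.1 < y.1 ∧ x.2 < y.2

/-- Adjacency in the niche graph of the doubly partial order associated with `V`:
two distinct vertices of `V` are adjacent iff they have a common prey or a common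
predator in `V`. -/
def nicheAdj (V : Finset (ℝ × ℝ)) (u v : ℝ × ℝ) : Prop :=
  u ∈ V ∧ v ∈ V ∧ u ≠ v ∧
    ((∃ a ∈ V, prec a u ∧ prec a v) ∨ (∃ a ∈ V, prec u a ∧ prec v a))

/-- A point of `ℝ²` with both coordinates integer. -/
def isIntegerPoint (p : ℝ × ℝ) : Prop :=
  (∃ m : ℤ, p.1 = m) ∧ (∃ n : ℤ, p.2 = n)

/-- Distinct, non-consecutive integer points on a common line `L_s` differ by at least `2` in the
first coordinate. -/
lemma add_two_le_of_same_line {u v : ℝ × ℝ} (hu : isIntegerPoint u) (hv : isIntegerPoint v)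
    (huv : u ≠ v) (hle : u.1 ≤ v.1) (h : u.1 + 1 ≠ v.1 ∨ u.2 - 1 ≠ v.2)
    (hs : u.1 + u.2 = v.1 + v.2) : u.1 + 2 ≤ v.1 := by
  obtain ⟨m, hm⟩ := hu.1
  obtain ⟨n, hn⟩ := hv.1
  have h0 : m ≠ n := by
    rintro rfl
    exact huv (Prod.ext (by linarith) (by linarith))
  have h1 : m + 1 ≠ n := by
    rintro rfl
    push_cast at hn
    rcases h with h | h <;> exact h (by linarith)
  have hmn : m ≤ n := by
    rw [hm, hn] at hle
    exact_mod_cast hle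
  have h2 : m + 2 ≤ n := by omega
  rw [hm, hn]
  exact_mod_cast h2

theorem stmt0 (c : ℝ) (V : Finset (ℝ × ℝ))
    (hint : ∀ p ∈ V, isIntegerPoint p → p.1 + p.2 = c ∨ p.1 + p.2 = c + 2)
    (hnonint : ∀ p ∈ V, ¬ isIntegerPoint p → c < p.1 + p.2 ∧ p.1 + p.2 < c + 2)
    (u v : ℝ × ℝ) (hu : u ∈ V) (hv : v ∈ V)
    (huint : isIntegerPoint u) (hvint : isIntegerPoint v)
    (huv : u ≠ v) (hle : u.1 ≤ v.1)
    (h : u.1 + 1 ≠ v.1 ∨ u.2 - 1 ≠ v.2) :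
    ¬ nicheAdj V u v := by
  have strip : ∀ p ∈ V, c ≤ p.1 + p.2 ∧ p.1 + p.2 ≤ c + 2 := by
    intro p hp
    by_cases hi : isIntegerPoint p
    · rcases hint p hp hi with e | e <;> constructor <;> linarith
    · exact ⟨(hnonint p hp hi).1.le, (hnonint p hp hi).2.le⟩
  have gap := add_two_le_of_same_line huint hvint huv hle h
  rintro ⟨-, -, -, ⟨a, ha, ⟨hu1, hu2⟩, hv1, hv2⟩ | ⟨a, ha, ⟨hu1, hu2⟩, hv1, hv2⟩⟩
  · have hua : u.1 + u.2 = c + 2 :=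
      (hint u hu huint).resolve_left fun e => by linarith [(strip a ha).1]
    have hva : v.1 + v.2 = c + 2 :=
      (hint v hv hvint).resolve_left fun e => by linarith [(strip a ha).1]
    linarith [gap (hua.trans hva.symm), (strip a ha).1]
  · have hua : u.1 + u.2 = c :=
      (hint u hu huint).resolve_right fun e => by linarith [(strip a ha).2]
    have hva : v.1 + v.2 = c :=
      (hint v hv hvint).resolve_right fun e => by linarith [(strip a ha).2]
    linarith [gap (hua.trans hva.symm), (strip a ha).2]
end

section
/- For every integer n ≥ 4, there exists a finite subset V of ℝ² such that the niche graph of the doubly partial order associated with V contains a cycle of length n as an induced subgraph; that is, there exist n distinct vertices v₀, v₁, …, v_{n−1} in V such that for all i ≠ j, v_i and v_j are adjacent in the niche graph if and only if i − j ≡ ±1 (mod n). -/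
/-- The point of the plane with given integer coordinates. -/
def intPt (a b : ℤ) : ℝ × ℝ := ((a : ℝ), (b : ℝ))

lemma prec_intPt (a b c d : ℤ) : prec (intPt a b) (intPt c d) ↔ a < c ∧ b < d := by
  simp [prec, intPt]

lemma intPt_inj (a b c d : ℤ) : intPt a b = intPt c d ↔ a = c ∧ b = d := by
  simp [intPt]

/-- The `k`-th element of the fence: `(k, -k)` for `k` even, `(k + 2, -k + 2)` for `k` odd. -/
def fencePt (k : ℕ) : ℝ × ℝ := intPt (k + 2 * (k % 2)) (-k + 2 * (k % 2))

/-- The point attached to the last element `f_m` of the fence: just below it for `m` even,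
just above it for `m` odd. -/
def endPt (m : ℕ) : ℝ × ℝ := intPt (m - 1 + 4 * (m % 2)) (-m - 1 + 4 * (m % 2))

/-- The fence `f₀, …, f_{n-1}` together with the two points attached to its ends. -/
noncomputable def fenceSet (n : ℕ) : Finset (ℝ × ℝ) :=
  (Finset.range n).image fencePt ∪ {intPt (-1) (-1), endPt (n - 1)}

lemma fencePt_mem {n k : ℕ} (hk : k < n) : fencePt k ∈ fenceSet n := by
  simp only [fenceSet, Finset.mem_union, Finset.mem_image, Finset.mem_range]
  exact Or.inl ⟨k, hk, rfl⟩

lemma exists_fenceSet {n : ℕ} (P : ℝ × ℝ → Prop) :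
    (∃ a ∈ fenceSet n, P a) ↔
      (∃ k < n, P (fencePt k)) ∨ P (intPt (-1) (-1)) ∨ P (endPt (n - 1)) := by
  simp only [fenceSet, Finset.mem_union, Finset.mem_image, Finset.mem_range, Finset.mem_insert,
    Finset.mem_singleton]
  grind

lemma fencePt_injective : Function.Injective fencePt := by
  intro i j h
  rw [fencePt, fencePt, intPt_inj] at h
  omega

lemma nicheAdj_comm {V : Finset (ℝ × ℝ)} {u v : ℝ × ℝ} : nicheAdj V u v ↔ nicheAdj V v u := by
  unfold nicheAdj
  grind

/-- The niche graph restricted to the fence: `fᵢ ~ fᵢ₊₂`, `f₀ ~ f₁` and `f_{n-2} ~ f_{n-1}`. -/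
lemma nicheAdj_fencePt {n i j : ℕ} (hij : i < j) (hj : j < n) :
    nicheAdj (fenceSet n) (fencePt i) (fencePt j) ↔
      j = i + 2 ∨ (i = 0 ∧ j = 1) ∨ (i + 2 = n ∧ j + 1 = n) := by
  have hne : fencePt i ≠ fencePt j := fun h => hij.ne (fencePt_injective h)
  unfold nicheAdj
  rw [exists_fenceSet, exists_fenceSet]
  simp only [fencePt_mem (hij.trans hj), fencePt_mem hj, hne, ne_eq, not_false_eq_true, true_and]
  simp only [fencePt, endPt, prec_intPt]
  constructor
  · rintro ((⟨k, hk, h⟩ | h | h) | (⟨k, hk, h⟩ | h | h)) <;> omega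
  · rintro (h | h | h)
    · rcases Nat.mod_two_eq_zero_or_one i with hi | hi
      · exact Or.inr (Or.inl ⟨i + 1, by omega, by omega⟩)
      · exact Or.inl (Or.inl ⟨i + 1, by omega, by omega⟩)
    · exact Or.inl (Or.inr (Or.inl (by omega)))
    · rcases Nat.mod_two_eq_zero_or_one j with hi | hi
      · exact Or.inl (Or.inr (Or.inr (by omega)))
      · exact Or.inr (Or.inr (Or.inr (by omega)))

/-- The enumeration `0, 2, 4, …, 5, 3, 1` of `{0, …, n - 1}`. -/
def cyc (n k : ℕ) : ℕ := if 2 * k < n then 2 * k else 2 * n - 1 - 2 * k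

lemma cyc_lt {n k : ℕ} (hk : k < n) : cyc n k < n := by
  unfold cyc
  split_ifs <;> omega

lemma cyc_inj {n k l : ℕ} (hk : k < n) (hl : l < n) (h : cyc n k = cyc n l) : k = l := by
  unfold cyc at h
  split_ifs at h <;> omega

lemma nicheAdj_cyc {n k l : ℕ} (hn : 4 ≤ n) (hk : k < n) (hl : l < n) (hkl : k ≠ l) :
    nicheAdj (fenceSet n) (fencePt (cyc n k)) (fencePt (cyc n l)) ↔
      (l = k + 1 ∨ k + 1 = n ∧ l = 0) ∨ (k = l + 1 ∨ l + 1 = n ∧ k = 0) := by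
  rcases lt_trichotomy (cyc n k) (cyc n l) with h | h | h
  · rw [nicheAdj_fencePt h (cyc_lt hl)]
    unfold cyc at h ⊢
    split_ifs at h ⊢ <;> omega
  · exact absurd (cyc_inj hk hl h) hkl
  · rw [nicheAdj_comm, nicheAdj_fencePt h (cyc_lt hk)]
    unfold cyc at h ⊢
    split_ifs at h ⊢ <;> omega

lemma zmod_eq_add_one_iff {n : ℕ} (hn : 4 ≤ n) (i j : ZMod n) :
    j = i + 1 ↔ j.val = i.val + 1 ∨ i.val + 1 = n ∧ j.val = 0 := by
  have : NeZero n := ⟨by omega⟩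
  have : Fact (1 < n) := ⟨by omega⟩
  have hi := i.val_lt
  have hj := j.val_lt
  rw [← (ZMod.val_injective n).eq_iff, ZMod.val_add, ZMod.val_one]
  rcases Nat.lt_or_ge (i.val + 1) n with h | h
  · rw [Nat.mod_eq_of_lt h]
    omega
  · have h' : i.val + 1 = n := by omega
    rw [h', Nat.mod_self]
    omega

/-- For every `n ≥ 4` there is a doubly partial order whose niche graph contains
an induced cycle of length `n`. -/
theorem stmt1 (n : ℕ) (hn : 4 ≤ n) :
    ∃ (V : Finset (ℝ × ℝ)) (v : ZMod n → ℝ × ℝ),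
      Function.Injective v ∧ (∀ i, v i ∈ V) ∧
      ∀ i j : ZMod n, i ≠ j →
        (nicheAdj V (v i) (v j) ↔ j = i + 1 ∨ j = i - 1) := by
  have : NeZero n := ⟨by omega⟩
  refine ⟨fenceSet n, fun i => fencePt (cyc n i.val), ?_, ?_, ?_⟩
  · intro i j h
    exact ZMod.val_injective n (cyc_inj i.val_lt j.val_lt (fencePt_injective h))
  · exact fun i => fencePt_mem (cyc_lt i.val_lt)
  · intro i j hij
    have hval : i.val ≠ j.val := fun h => hij (ZMod.val_injective n h)
    rw [nicheAdj_cyc hn i.val_lt j.val_lt hval, eq_sub_iff_add_eq, eq_comm (a := j + 1),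
      zmod_eq_add_one_iff hn, zmod_eq_add_one_iff hn]
end

section
/- There exists a finite subset V of ℝ² such that the niche graph of the doubly partial order associated with V is not an interval graph; that is, there is no assignment to each vertex v of a nonempty real interval J(v) ⊆ ℝ such that distinct vertices u and v are adjacent in the niche graph if and only if J(u) ∩ J(v) ≠ ∅. -/
/-- Intervals cannot realize an induced four-cycle: if `A, B, C, D` intersect cyclically, then
`A` meets `C` or `B` meets `D`. Picking a point in each of the four intersections, the segment
`[x, y]` lies in `B` and `[z, w]` in `D`; if these are disjoint, then the gap between them is
bridged by both `[y, z] ⊆ C` and `[w, x] ⊆ A`. -/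
theorem no_interval_four_cycle {A B C D : Set ℝ}
    (hA : A.OrdConnected) (hB : B.OrdConnected) (hC : C.OrdConnected) (hD : D.OrdConnected)
    (hAB : (A ∩ B).Nonempty) (hBC : (B ∩ C).Nonempty)
    (hCD : (C ∩ D).Nonempty) (hDA : (D ∩ A).Nonempty)
    (hAC : ¬ (A ∩ C).Nonempty) (hBD : ¬ (B ∩ D).Nonempty) : False := by
  obtain ⟨x, hxA, hxB⟩ := hAB
  obtain ⟨y, hyB, hyC⟩ := hBC
  obtain ⟨z, hzC, hzD⟩ := hCD
  obtain ⟨w, hwD, hwA⟩ := hDA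
  have segB := hB.uIcc_subset hxB hyB
  have segC := hC.uIcc_subset hyC hzC
  have segD := hD.uIcc_subset hzD hwD
  have segA := hA.uIcc_subset hwA hxA
  have key : ∀ t, (t ∈ Set.uIcc x y → t ∉ Set.uIcc z w) ∧
      (t ∈ Set.uIcc y z → t ∉ Set.uIcc w x) := fun t =>
    ⟨fun h g => hBD ⟨t, segB h, segD g⟩, fun h g => hAC ⟨t, segA g, segC h⟩⟩
  -- Disjointness fails at one of the four points: if two segments meet, an endpoint of one of
  -- them lies in the other.
  have kx := key x
  have ky := key y
  have kz := key z
  have kw := key w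
  simp only [Set.mem_uIcc] at kx ky kz kw
  grind

/-- There is a doubly partial order whose niche graph is not an interval graph:
no assignment of nonempty real intervals (order-connected subsets of `ℝ`) to the
vertices realizes the adjacency relation by interval intersection. -/
theorem stmt2 :
    ∃ V : Finset (ℝ × ℝ),
      ¬ ∃ J : ℝ × ℝ → Set ℝ,
        (∀ v ∈ V, (J v).Nonempty ∧ (J v).OrdConnected) ∧
        (∀ u ∈ V, ∀ v ∈ V, u ≠ v →
          (nicheAdj V u v ↔ (J u ∩ J v).Nonempty)) := by
  refine ⟨{(5, 2), (5, 5), (3, 4), (3, 1), (1, 3), (7, 3)}, ?_⟩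
  rintro ⟨J, hJ, hadj⟩
  have hab := hadj (5, 2) (by simp) (5, 5) (by simp) (by simp)
  have hbc := hadj (5, 5) (by simp) (3, 4) (by simp) (by simp)
  have hcd := hadj (3, 4) (by simp) (3, 1) (by simp) (by simp)
  have hda := hadj (3, 1) (by simp) (5, 2) (by simp) (by simp)
  have hac := hadj (5, 2) (by simp) (3, 4) (by simp) (by simp)
  have hbd := hadj (5, 5) (by simp) (3, 1) (by simp) (by simp)
  refine no_interval_four_cycle (hJ (5, 2) (by simp)).2 (hJ (5, 5) (by simp)).2
    (hJ (3, 4) (by simp)).2 (hJ (3, 1) (by simp)).2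
    (hab.1 ?_) (hbc.1 ?_) (hcd.1 ?_) (hda.1 ?_) (mt hac.2 ?_) (mt hbd.2 ?_) <;>
  · norm_num [nicheAdj, prec]
end

section
/- Let V be a finite subset of ℝ² and let G be the niche graph of the doubly partial order associated with V. If G is triangle-free (no three distinct vertices are pairwise adjacent), then G is an interval graph: one can assign to each vertex v a nonempty real interval J(v) ⊆ ℝ so that distinct vertices u, v are adjacent in G if and only if J(u) ∩ J(v) ≠ ∅. -/
theorem prec_irrefl (x : ℝ × ℝ) : ¬ prec x x := fun h => lt_irrefl _ h.1

theorem prec_trans {x y z : ℝ × ℝ} (h : prec x y) (h' : prec y z) : prec x z :=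
  ⟨h.1.trans h'.1, h.2.trans h'.2⟩

/-! ### Disjoint placement of families of intervals -/

/-- It suffices to represent adjacency by closed intervals `[l v, r v]` living on separate copies
of the line, indexed by an integer key `k v`. -/
theorem exists_intervals_of_keys (V : Finset (ℝ × ℝ)) (k : ℝ × ℝ → ℤ) (l r : ℝ × ℝ → ℝ)
    (hlr : ∀ v ∈ V, l v ≤ r v)
    (h : ∀ u ∈ V, ∀ v ∈ V, u ≠ v → (nicheAdj V u v ↔ k u = k v ∧ l u ≤ r v ∧ l v ≤ r u)) :
    ∃ J : ℝ × ℝ → Set ℝ,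
      (∀ v ∈ V, (J v).Nonempty ∧ (J v).OrdConnected) ∧
      (∀ u ∈ V, ∀ v ∈ V, u ≠ v →
        (nicheAdj V u v ↔ (J u ∩ J v).Nonempty)) := by
  -- `|arctan| < 2`, so translates by distinct multiples of `4` do not meet.
  have hb : ∀ x, Real.arctan x < 2 ∧ -2 < Real.arctan x := fun x =>
    ⟨by linarith [Real.arctan_lt_pi_div_two x, Real.pi_lt_four],
     by linarith [Real.neg_pi_div_two_lt_arctan x, Real.pi_lt_four]⟩
  refine ⟨fun v => Set.Icc (Real.arctan (l v) + 4 * k v) (Real.arctan (r v) + 4 * k v), ?_, ?_⟩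
  · intro v hv
    have := Real.arctan_strictMono.monotone (hlr v hv)
    exact ⟨Set.nonempty_Icc.2 (by linarith), Set.ordConnected_Icc⟩
  · intro u hu v hv huv
    have hu' := Real.arctan_strictMono.monotone (hlr u hu)
    have hv' := Real.arctan_strictMono.monotone (hlr v hv)
    rw [h u hu v hv huv, Set.Icc_inter_Icc, Set.nonempty_Icc, sup_le_iff, le_inf_iff, le_inf_iff]
    constructor
    · rintro ⟨hk, h1, h2⟩
      have h1' := Real.arctan_strictMono.monotone h1
      have h2' := Real.arctan_strictMono.monotone h2
      rw [hk]
      exact ⟨⟨by linarith, by linarith⟩, ⟨by linarith, by linarith⟩⟩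
    · rintro ⟨⟨-, h1⟩, ⟨h2, -⟩⟩
      have hk : k u = k v := by
        have a1 : (k u : ℝ) < k v + 1 := by linarith [(hb (l u)).2, (hb (r v)).1]
        have a2 : (k v : ℝ) < k u + 1 := by linarith [(hb (l v)).2, (hb (r u)).1]
        have a1' : k u < k v + 1 := by exact_mod_cast a1
        have a2' : k v < k u + 1 := by exact_mod_cast a2
        omega
      rw [hk] at h1 h2
      exact ⟨hk, Real.arctan_strictMono.le_iff_le.1 (by linarith),
        Real.arctan_strictMono.le_iff_le.1 (by linarith)⟩

/-! ### The staircase order on an antichain -/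

/-- Along an antichain, `x.1 - x.2` increases with the first coordinate and decreases with the
second. -/
theorem staircase {p q : ℝ × ℝ} (h1 : ¬ prec p q) (h2 : ¬ prec q p)
    (h : p.1 - p.2 ≤ q.1 - q.2) : p.1 ≤ q.1 ∧ q.2 ≤ p.2 := by
  unfold prec at h1 h2
  constructor
  · by_contra! hc
    exact h2 ⟨hc, by linarith⟩
  · by_contra! hc
    exact h1 ⟨by linarith, hc⟩

theorem prec_of_between {p b q u : ℝ × ℝ} (h1 : ¬ prec p b) (h2 : ¬ prec b p)
    (h3 : ¬ prec b q) (h4 : ¬ prec q b) (hpb : p.1 - p.2 ≤ b.1 - b.2)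
    (hbq : b.1 - b.2 ≤ q.1 - q.2) (hp : prec p u) (hq : prec q u) : prec b u :=
  ⟨(staircase h3 h4 hbq).1.trans_lt hq.1, (staircase h1 h2 hpb).2.trans_lt hp.2⟩

theorem prec_of_between' {p b q u : ℝ × ℝ} (h1 : ¬ prec p b) (h2 : ¬ prec b p)
    (h3 : ¬ prec b q) (h4 : ¬ prec q b) (hpb : p.1 - p.2 ≤ b.1 - b.2)
    (hbq : b.1 - b.2 ≤ q.1 - q.2) (hp : prec u p) (hq : prec u q) : prec u b :=
  ⟨hp.1.trans_le (staircase h1 h2 hpb).1, hq.2.trans_le (staircase h3 h4 hbq).2⟩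

/-- `[l, r]` is the interval spanned by the values `x.1 - x.2` of the prey `x ∈ V` of `u`;
in particular `u` has prey. -/
def PreySpan (V : Finset (ℝ × ℝ)) (u : ℝ × ℝ) (l r : ℝ) : Prop :=
  (∃ p ∈ V, prec p u ∧ p.1 - p.2 = l) ∧ (∃ q ∈ V, prec q u ∧ q.1 - q.2 = r) ∧
    ∀ x ∈ V, prec x u → l ≤ x.1 - x.2 ∧ x.1 - x.2 ≤ r

/-- `[l, r]` is the interval spanned by the values `x.1 - x.2` of the predators `x ∈ V` of `u`;
in particular `u` has predators. -/
def PredSpan (V : Finset (ℝ × ℝ)) (u : ℝ × ℝ) (l r : ℝ) : Prop :=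
  (∃ p ∈ V, prec u p ∧ p.1 - p.2 = l) ∧ (∃ q ∈ V, prec u q ∧ q.1 - q.2 = r) ∧
    ∀ x ∈ V, prec u x → l ≤ x.1 - x.2 ∧ x.1 - x.2 ≤ r

/-- A nonempty finite set of values has a least and a greatest element. -/
theorem exists_span (V : Finset (ℝ × ℝ)) (P : ℝ × ℝ → Prop) (h : ∃ x ∈ V, P x) :
    ∃ l r : ℝ, l ≤ r ∧ (∃ p ∈ V, P p ∧ p.1 - p.2 = l) ∧ (∃ q ∈ V, P q ∧ q.1 - q.2 = r) ∧
      ∀ x ∈ V, P x → l ≤ x.1 - x.2 ∧ x.1 - x.2 ≤ r := by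
  classical
  have hne : (V.filter P).Nonempty := by
    obtain ⟨x, hx, hP⟩ := h
    exact ⟨x, Finset.mem_filter.2 ⟨hx, hP⟩⟩
  obtain ⟨p, hp, hpm⟩ := (V.filter P).exists_min_image (fun x => x.1 - x.2) hne
  obtain ⟨q, hq, hqm⟩ := (V.filter P).exists_max_image (fun x => x.1 - x.2) hne
  rw [Finset.mem_filter] at hp hq
  exact ⟨_, _, hpm q (Finset.mem_filter.2 hq), ⟨p, hp.1, hp.2, rfl⟩, ⟨q, hq.1, hq.2, rfl⟩,
    fun x hx hP => ⟨hpm x (Finset.mem_filter.2 ⟨hx, hP⟩), hqm x (Finset.mem_filter.2 ⟨hx, hP⟩)⟩⟩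

/-- If all prey of `u` and `v` are minimal, the spans of their prey intersect iff they share a
prey: of two intersecting spans, the larger left end lies in both, and it belongs to a prey of one
of `u`, `v` which by `prec_of_between` is a prey of the other. -/
theorem common_prey_iff {V : Finset (ℝ × ℝ)} {u v : ℝ × ℝ} {l r l' r' : ℝ}
    (hu : PreySpan V u l r) (hv : PreySpan V v l' r')
    (mu : ∀ x ∈ V, prec x u → ∀ y ∈ V, ¬ prec y x)
    (mv : ∀ x ∈ V, prec x v → ∀ y ∈ V, ¬ prec y x) :
    (∃ a ∈ V, prec a u ∧ prec a v) ↔ l ≤ r' ∧ l' ≤ r := by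
  obtain ⟨⟨p, hp, hpu, rfl⟩, ⟨q, hq, hqu, rfl⟩, hb⟩ := hu
  obtain ⟨⟨p', hp', hpv, rfl⟩, ⟨q', hq', hqv, rfl⟩, hb'⟩ := hv
  constructor
  · rintro ⟨a, ha, hau, hav⟩
    have := hb a ha hau
    have := hb' a ha hav
    constructor <;> linarith
  · rintro ⟨h1, h2⟩
    rcases le_total (p.1 - p.2) (p'.1 - p'.2) with h | h
    · exact ⟨p', hp', prec_of_between (mv p' hp' hpv p hp) (mu p hp hpu p' hp')
        (mu q hq hqu p' hp') (mv p' hp' hpv q hq) h h2 hpu hqu, hpv⟩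
    · exact ⟨p, hp, hpu, prec_of_between (mu p hp hpu p' hp') (mv p' hp' hpv p hp)
        (mv q' hq' hqv p hp) (mu p hp hpu q' hq') h h1 hpv hqv⟩

/-- The dual of `common_prey_iff`. -/
theorem common_pred_iff {V : Finset (ℝ × ℝ)} {u v : ℝ × ℝ} {l r l' r' : ℝ}
    (hu : PredSpan V u l r) (hv : PredSpan V v l' r')
    (mu : ∀ x ∈ V, prec u x → ∀ y ∈ V, ¬ prec x y)
    (mv : ∀ x ∈ V, prec v x → ∀ y ∈ V, ¬ prec x y) :
    (∃ a ∈ V, prec u a ∧ prec v a) ↔ l ≤ r' ∧ l' ≤ r := by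
  obtain ⟨⟨p, hp, hpu, rfl⟩, ⟨q, hq, hqu, rfl⟩, hb⟩ := hu
  obtain ⟨⟨p', hp', hpv, rfl⟩, ⟨q', hq', hqv, rfl⟩, hb'⟩ := hv
  constructor
  · rintro ⟨a, ha, hau, hav⟩
    have := hb a ha hau
    have := hb' a ha hav
    constructor <;> linarith
  · rintro ⟨h1, h2⟩
    rcases le_total (p.1 - p.2) (p'.1 - p'.2) with h | h
    · exact ⟨p', hp', prec_of_between' (mu p hp hpu p' hp') (mv p' hp' hpv p hp)
        (mv p' hp' hpv q hq) (mu q hq hqu p' hp') h h2 hpu hqu, hpv⟩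
    · exact ⟨p, hp, hpu, prec_of_between' (mv p' hp' hpv p hp) (mu p hp hpu p' hp')
        (mu p hp hpu q' hq') (mv q' hq' hqv p hp) h h1 hpv hqv⟩

/-! ### Chains of three vertices -/

/-- `a ≺ b ≺ c` is a chain in `V`. -/
def IsChain3 (V : Finset (ℝ × ℝ)) (a b c : ℝ × ℝ) : Prop :=
  a ∈ V ∧ b ∈ V ∧ c ∈ V ∧ prec a b ∧ prec b c

/-- `u` is comparable to `v`. -/
def Comp (u v : ℝ × ℝ) : Prop := prec u v ∨ prec v u

/-- No vertex has three predators and none has three prey. -/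
def AtMostTwo (V : Finset (ℝ × ℝ)) : Prop :=
  ∀ z ∈ V, ∀ p ∈ V, ∀ q ∈ V, ∀ s ∈ V,
    ((prec z p ∧ prec z q ∧ prec z s) ∨ (prec p z ∧ prec q z ∧ prec s z)) →
    p = q ∨ p = s ∨ q = s

theorem atMostTwo_of_triangleFree {V : Finset (ℝ × ℝ)}
    (htf : ¬ ∃ a b c : ℝ × ℝ, a ≠ b ∧ a ≠ c ∧ b ≠ c ∧
      nicheAdj V a b ∧ nicheAdj V a c ∧ nicheAdj V b c) : AtMostTwo V := by
  intro z hz p hp q hq s hs h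
  by_contra! hne
  obtain ⟨h1, h2, h3⟩ := hne
  refine htf ⟨p, q, s, h1, h2, h3, ⟨hp, hq, h1, ?_⟩, ⟨hp, hs, h2, ?_⟩, ⟨hq, hs, h3, ?_⟩⟩
  · exact h.imp (fun h => ⟨z, hz, h.1, h.2.1⟩) (fun h => ⟨z, hz, h.1, h.2.1⟩)
  · exact h.imp (fun h => ⟨z, hz, h.1, h.2.2⟩) (fun h => ⟨z, hz, h.1, h.2.2⟩)
  · exact h.imp (fun h => ⟨z, hz, h.2.1, h.2.2⟩) (fun h => ⟨z, hz, h.2.1, h.2.2⟩)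

/-- A chain of three vertices is closed under comparability: a predator of any of its members is a
predator of `a`, and a prey of any of them is a prey of `c`. -/
theorem IsChain3.closed {V : Finset (ℝ × ℝ)} (h2 : AtMostTwo V) {a b c x y : ℝ × ℝ}
    (h : IsChain3 V a b c) (hx : x ∈ V) (hy : y = a ∨ y = b ∨ y = c) (hc : Comp x y) :
    x = a ∨ x = b ∨ x = c := by
  obtain ⟨ha, hb, hcV, hab, hbc⟩ := h
  have hac := prec_trans hab hbc
  have hne : b ≠ c := fun e => prec_irrefl c (e ▸ hbc)
  have hne' : a ≠ b := fun e => prec_irrefl b (e ▸ hab)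
  rcases hc with hc | hc
  · have hxc : prec x c := by
      rcases hy with rfl | rfl | rfl
      exacts [prec_trans hc hac, prec_trans hc hbc, hc]
    have := h2 c hcV x hx a ha b hb (Or.inr ⟨hxc, hac, hbc⟩)
    tauto
  · have hxa : prec a x := by
      rcases hy with rfl | rfl | rfl
      exacts [hc, prec_trans hab hc, prec_trans hac hc]
    have := h2 a ha x hx b hb c hcV (Or.inl ⟨hxa, hab, hac⟩)
    tauto

theorem IsChain3.not_lt {V : Finset (ℝ × ℝ)} (h2 : AtMostTwo V) {a b c x : ℝ × ℝ}
    (h : IsChain3 V a b c) (hx : x ∈ V) : ¬ prec x a := by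
  intro hxa
  have hab := h.2.2.2.1
  have hbc := h.2.2.2.2
  rcases h.closed h2 hx (Or.inl rfl) (Or.inl hxa) with rfl | rfl | rfl
  · exact prec_irrefl _ hxa
  · exact prec_irrefl _ (prec_trans hxa hab)
  · exact prec_irrefl _ (prec_trans hxa (prec_trans hab hbc))

theorem IsChain3.not_gt {V : Finset (ℝ × ℝ)} (h2 : AtMostTwo V) {a b c x : ℝ × ℝ}
    (h : IsChain3 V a b c) (hx : x ∈ V) : ¬ prec c x := by
  intro hxa
  have hab := h.2.2.2.1
  have hbc := h.2.2.2.2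
  rcases h.closed h2 hx (Or.inr (Or.inr rfl)) (Or.inr hxa) with rfl | rfl | rfl
  · exact prec_irrefl _ (prec_trans hxa (prec_trans hab hbc))
  · exact prec_irrefl _ (prec_trans hxa hbc)
  · exact prec_irrefl _ hxa

/-- Two chains that share a member have the same middle, the middle being the only member with
both prey and predators. -/
theorem IsChain3.middle_eq {V : Finset (ℝ × ℝ)} (h2 : AtMostTwo V) {a b c a' b' c' v : ℝ × ℝ}
    (h : IsChain3 V a b c) (h' : IsChain3 V a' b' c') (hv : v = a ∨ v = b ∨ v = c)
    (hv' : v = a' ∨ v = b' ∨ v = c') : b = b' := by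
  have hb' : b' = a ∨ b' = b ∨ b' = c := by
    rcases hv' with rfl | rfl | rfl
    · exact h.closed h2 h'.2.1 hv (Or.inr h'.2.2.2.1)
    · exact hv
    · exact h.closed h2 h'.2.1 hv (Or.inl h'.2.2.2.2)
  rcases hb' with rfl | rfl | rfl
  · exact absurd h'.2.2.2.1 (h.not_lt h2 h'.1)
  · rfl
  · exact absurd h'.2.2.2.2 (h.not_gt h2 h'.2.2.1)

theorem IsChain3.ends_eq {V : Finset (ℝ × ℝ)} (h2 : AtMostTwo V) {a b c a' c' : ℝ × ℝ}
    (h : IsChain3 V a b c) (h' : IsChain3 V a' b c') : a = a' ∧ c = c' := by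
  have hb : b = a ∨ b = b ∨ b = c := Or.inr (Or.inl rfl)
  constructor
  · rcases h.closed h2 h'.1 hb (Or.inl h'.2.2.2.1) with e | rfl | rfl
    · exact e.symm
    · exact absurd h'.2.2.2.1 (prec_irrefl _)
    · exact absurd h'.2.2.2.1 (h.not_gt h2 h.2.1)
  · rcases h.closed h2 h'.2.2.1 hb (Or.inr h'.2.2.2.2) with rfl | rfl | e
    · exact absurd h'.2.2.2.2 (h.not_lt h2 h.2.1)
    · exact absurd h'.2.2.2.2 (prec_irrefl _)
    · exact e.symm

theorem nicheAdj.symm {V : Finset (ℝ × ℝ)} {u v : ℝ × ℝ} (h : nicheAdj V u v) :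
    nicheAdj V v u := by
  obtain ⟨hu, hv, hne, h⟩ := h
  exact ⟨hv, hu, hne.symm, h.imp (fun ⟨a, ha, h, h'⟩ => ⟨a, ha, h', h⟩)
    (fun ⟨a, ha, h, h'⟩ => ⟨a, ha, h', h⟩)⟩

/-- A neighbour of a member of a chain is a member of that chain. -/
theorem IsChain3.adj_closed {V : Finset (ℝ × ℝ)} (h2 : AtMostTwo V) {a b c u v : ℝ × ℝ}
    (h : IsChain3 V a b c) (hu : u = a ∨ u = b ∨ u = c) (huv : nicheAdj V u v) :
    v = a ∨ v = b ∨ v = c := by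
  obtain ⟨-, hv, -, ⟨z, hz, hzu, hzv⟩ | ⟨z, hz, hzu, hzv⟩⟩ := huv
  · exact h.closed h2 hv (h.closed h2 hz hu (Or.inl hzu)) (Or.inr hzv)
  · exact h.closed h2 hv (h.closed h2 hz hu (Or.inr hzu)) (Or.inl hzv)

/-! ### The placement of each kind of vertex -/

/-- `u` belongs to no chain of three vertices. -/
def NoChain (V : Finset (ℝ × ℝ)) (u : ℝ × ℝ) : Prop :=
  ∀ a b c, IsChain3 V a b c → ¬ (u = a ∨ u = b ∨ u = c)

/-- `u` is a member of a chain `a ≺ b ≺ c`; its interval is `[0,1]`, `[1,2]`, `[2,3]` according to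
its position, and its key comes from the middle `b`. -/
def InChain (V : Finset (ℝ × ℝ)) (e : ℝ × ℝ → ℕ) (u : ℝ × ℝ) (k : ℤ) (l r : ℝ) : Prop :=
  ∃ a b c, IsChain3 V a b c ∧ k = e b + 2 ∧ r = l + 1 ∧
    ((u = a ∧ l = 0) ∨ (u = b ∧ l = 1) ∨ (u = c ∧ l = 2))

/-- `u` is incomparable to every vertex; it has a key of its own. -/
def Isolated (V : Finset (ℝ × ℝ)) (e : ℝ × ℝ → ℕ) (u : ℝ × ℝ) (k : ℤ) (l r : ℝ) : Prop :=
  NoChain V u ∧ (∀ x ∈ V, ¬ prec x u) ∧ (∀ x ∈ V, ¬ prec u x) ∧ k = e u + 2 ∧ l = 0 ∧ r = 0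

/-- `u` is a top: it has prey and lies in no chain. Its interval is the span of its prey. -/
def IsTopVertex (V : Finset (ℝ × ℝ)) (u : ℝ × ℝ) (k : ℤ) (l r : ℝ) : Prop :=
  NoChain V u ∧ PreySpan V u l r ∧ k = 0

/-- `u` is a bottom: it has predators and lies in no chain. Its interval is the span of its
predators. -/
def IsBottomVertex (V : Finset (ℝ × ℝ)) (u : ℝ × ℝ) (k : ℤ) (l r : ℝ) : Prop :=
  NoChain V u ∧ PredSpan V u l r ∧ k = 1

theorem exists_place (V : Finset (ℝ × ℝ)) (e : ℝ × ℝ → ℕ) (u : ℝ × ℝ) :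
    ∃ (k : ℤ) (l r : ℝ), l ≤ r ∧
      (InChain V e u k l r ∨ Isolated V e u k l r ∨ IsTopVertex V u k l r ∨ IsBottomVertex V u k l r) := by
  by_cases hc : NoChain V u
  · by_cases h1 : ∃ x ∈ V, prec x u
    · obtain ⟨l, r, hlr, h⟩ := exists_span V (fun x => prec x u) h1
      exact ⟨0, l, r, hlr, Or.inr (Or.inr (Or.inl ⟨hc, h, rfl⟩))⟩
    · by_cases h2 : ∃ x ∈ V, prec u x
      · obtain ⟨l, r, hlr, h⟩ := exists_span V (fun x => prec u x) h2
        exact ⟨1, l, r, hlr, Or.inr (Or.inr (Or.inr ⟨hc, h, rfl⟩))⟩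
      · push Not at h1 h2
        exact ⟨_, 0, 0, le_rfl, Or.inr (Or.inl ⟨hc, h1, h2, rfl, rfl, rfl⟩)⟩
  · unfold NoChain at hc
    push Not at hc
    obtain ⟨a, b, c, h, hu⟩ := hc
    rcases hu with hu | hu | hu
    · exact ⟨_, 0, _, by linarith, Or.inl ⟨a, b, c, h, rfl, rfl, Or.inl ⟨hu, rfl⟩⟩⟩
    · exact ⟨_, 1, _, by linarith, Or.inl ⟨a, b, c, h, rfl, rfl, Or.inr (Or.inl ⟨hu, rfl⟩)⟩⟩
    · exact ⟨_, 2, _, by linarith, Or.inl ⟨a, b, c, h, rfl, rfl, Or.inr (Or.inr ⟨hu, rfl⟩)⟩⟩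

/-- Within a chain the niche graph is the path `a - b - c`, matching `[0,1]`, `[1,2]`, `[2,3]`. -/
theorem adj_iff_chain_chain {V : Finset (ℝ × ℝ)} (h2 : AtMostTwo V) {e : ℝ × ℝ → ℕ}
    (he : Set.InjOn e V) {u v : ℝ × ℝ} (huv : u ≠ v) {k k' : ℤ} {l r l' r' : ℝ}
    (hu : InChain V e u k l r) (hv : InChain V e v k' l' r') :
    nicheAdj V u v ↔ k = k' ∧ l ≤ r' ∧ l' ≤ r := by
  obtain ⟨a, b, c, h, rfl, rfl, hu⟩ := hu
  obtain ⟨a', b', c', h', rfl, rfl, hv⟩ := hv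
  have hu3 : u = a ∨ u = b ∨ u = c := by tauto
  have hv3 : v = a' ∨ v = b' ∨ v = c' := by tauto
  by_cases hb : b = b'
  · subst hb
    obtain ⟨rfl, rfl⟩ := h.ends_eq h2 h'
    obtain ⟨ha, hbV, hc, hab, hbc⟩ := id h
    have hac := prec_trans hab hbc
    have hne : a ≠ b := fun e => prec_irrefl b (e ▸ hab)
    have hne' : b ≠ c := fun e => prec_irrefl c (e ▸ hbc)
    have adj_ab : nicheAdj V a b := ⟨ha, hbV, hne, Or.inr ⟨c, hc, hac, hbc⟩⟩
    have adj_bc : nicheAdj V b c := ⟨hbV, hc, hne', Or.inl ⟨a, ha, hab, hac⟩⟩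
    have nadj : ¬ nicheAdj V a c := by
      rintro ⟨-, -, -, ⟨z, hz, hza, -⟩ | ⟨z, hz, -, hcz⟩⟩
      · exact h.not_lt h2 hz hza
      · exact h.not_gt h2 hz hcz
    have nadj' : ¬ nicheAdj V c a := fun h => nadj h.symm
    rcases hu with ⟨rfl, rfl⟩ | ⟨rfl, rfl⟩ | ⟨rfl, rfl⟩ <;>
    rcases hv with ⟨rfl, rfl⟩ | ⟨rfl, rfl⟩ | ⟨rfl, rfl⟩ <;>
    first
      | exact absurd rfl huv
      | exact iff_of_true (by first | assumption | exact adj_ab.symm | exact adj_bc.symm)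
          (by norm_num)
      | exact iff_of_false (by assumption) (by norm_num)
  · refine iff_of_false (fun hadj => ?_) (fun hk => ?_)
    · exact hb (h.middle_eq h2 h' (h.adj_closed h2 hu3 hadj) hv3)
    · exact hb (he h.2.1 h'.2.1 (by omega))

theorem not_adj_chain_noChain {V : Finset (ℝ × ℝ)} (h2 : AtMostTwo V) {e : ℝ × ℝ → ℕ}
    {u v : ℝ × ℝ} {k : ℤ} {l r : ℝ} (hu : InChain V e u k l r) (hv : NoChain V v) :
    ¬ nicheAdj V u v := by
  obtain ⟨a, b, c, h, -, -, hu⟩ := hu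
  exact fun hadj => hv a b c h (h.adj_closed h2 (by tauto) hadj)

theorem not_adj_isolated {V : Finset (ℝ × ℝ)} {e : ℝ × ℝ → ℕ}
    {u v : ℝ × ℝ} {k : ℤ} {l r : ℝ} (hu : Isolated V e u k l r) : ¬ nicheAdj V u v := by
  rintro ⟨-, -, -, ⟨z, hz, hzu, -⟩ | ⟨z, hz, hzu, -⟩⟩
  · exact hu.2.1 z hz hzu
  · exact hu.2.2.1 z hz hzu

theorem IsTopVertex.no_pred {V : Finset (ℝ × ℝ)} {u : ℝ × ℝ} (hu : u ∈ V) {k : ℤ} {l r : ℝ}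
    (h : IsTopVertex V u k l r) : ∀ x ∈ V, ¬ prec u x := by
  intro x hx hux
  obtain ⟨hn, ⟨⟨p, hp, hpu, -⟩, -⟩, -⟩ := h
  exact hn p u x ⟨hp, hu, hx, hpu, hux⟩ (Or.inr (Or.inl rfl))

theorem IsBottomVertex.no_prey {V : Finset (ℝ × ℝ)} {u : ℝ × ℝ} (hu : u ∈ V) {k : ℤ} {l r : ℝ}
    (h : IsBottomVertex V u k l r) : ∀ x ∈ V, ¬ prec x u := by
  intro x hx hux
  obtain ⟨hn, ⟨⟨p, hp, hpu, -⟩, -⟩, -⟩ := h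
  exact hn x u p ⟨hx, hu, hp, hux, hpu⟩ (Or.inr (Or.inl rfl))

theorem adj_iff_top_top {V : Finset (ℝ × ℝ)} {u v : ℝ × ℝ} (hu : u ∈ V) (hv : v ∈ V)
    (huv : u ≠ v) {k k' : ℤ} {l r l' r' : ℝ} (tu : IsTopVertex V u k l r) (tv : IsTopVertex V v k' l' r') :
    nicheAdj V u v ↔ k = k' ∧ l ≤ r' ∧ l' ≤ r := by
  have key := common_prey_iff tu.2.1 tv.2.1
    (fun x hx hxu y hy hyx => tu.1 y x u ⟨hy, hx, hu, hyx, hxu⟩ (Or.inr (Or.inr rfl)))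
    (fun x hx hxv y hy hyx => tv.1 y x v ⟨hy, hx, hv, hyx, hxv⟩ (Or.inr (Or.inr rfl)))
  rw [← key]
  constructor
  · rintro ⟨-, -, -, h | ⟨a, ha, hua, -⟩⟩
    · exact ⟨tu.2.2.trans tv.2.2.symm, h⟩
    · exact absurd hua (tu.no_pred hu a ha)
  · exact fun h => ⟨hu, hv, huv, Or.inl h.2⟩

theorem adj_iff_bottom_bottom {V : Finset (ℝ × ℝ)} {u v : ℝ × ℝ} (hu : u ∈ V) (hv : v ∈ V)
    (huv : u ≠ v) {k k' : ℤ} {l r l' r' : ℝ} (bu : IsBottomVertex V u k l r)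
    (bv : IsBottomVertex V v k' l' r') : nicheAdj V u v ↔ k = k' ∧ l ≤ r' ∧ l' ≤ r := by
  have key := common_pred_iff bu.2.1 bv.2.1
    (fun x hx hux y hy hxy => bu.1 u x y ⟨hu, hx, hy, hux, hxy⟩ (Or.inl rfl))
    (fun x hx hvx y hy hxy => bv.1 v x y ⟨hv, hx, hy, hvx, hxy⟩ (Or.inl rfl))
  rw [← key]
  constructor
  · rintro ⟨-, -, -, ⟨a, ha, hau, -⟩ | h⟩
    · exact absurd hau (bu.no_prey hu a ha)
    · exact ⟨bu.2.2.trans bv.2.2.symm, h⟩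
  · exact fun h => ⟨hu, hv, huv, Or.inr h.2⟩

theorem not_adj_top_bottom {V : Finset (ℝ × ℝ)} {u v : ℝ × ℝ} {k k' : ℤ} {l r l' r' : ℝ}
    (tu : IsTopVertex V u k l r) (bv : IsBottomVertex V v k' l' r') : ¬ nicheAdj V u v := by
  rintro ⟨hu, hv, -, ⟨z, hz, -, hzv⟩ | ⟨z, hz, huz, -⟩⟩
  · exact bv.no_prey hv z hz hzv
  · exact tu.no_pred hu z hz huz

/-- The key of a vertex in a chain differs from that of a vertex outside all chains. -/
theorem key_ne_of_chain {V : Finset (ℝ × ℝ)} {e : ℝ × ℝ → ℕ} (he : Set.InjOn e V)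
    {u v : ℝ × ℝ} (hv : v ∈ V) {k k' : ℤ} {l r l' r' : ℝ} (hu : InChain V e u k l r)
    (h : Isolated V e v k' l' r' ∨ IsTopVertex V v k' l' r' ∨ IsBottomVertex V v k' l' r') : k ≠ k' := by
  obtain ⟨a, b, c, hc, rfl, -, -⟩ := hu
  rcases h with h | h | h
  · intro hk
    have hk' := h.2.2.2.1
    have : v = b := he hv hc.2.1 (by omega)
    exact h.1 a b c hc (Or.inr (Or.inl this))
  · have := h.2.2
    omega
  · have := h.2.2
    omega

/-- If the niche graph of a doubly partial order is triangle-free, then it is an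
interval graph: one can assign to each vertex a nonempty real interval
(a nonempty order-connected subset of `ℝ`) so that distinct vertices are
adjacent iff their intervals intersect. -/
theorem stmt7 (V : Finset (ℝ × ℝ))
    (htf : ¬ ∃ a b c : ℝ × ℝ, a ≠ b ∧ a ≠ c ∧ b ≠ c ∧
      nicheAdj V a b ∧ nicheAdj V a c ∧ nicheAdj V b c) :
    ∃ J : ℝ × ℝ → Set ℝ,
      (∀ v ∈ V, (J v).Nonempty ∧ (J v).OrdConnected) ∧
      (∀ u ∈ V, ∀ v ∈ V, u ≠ v →
        (nicheAdj V u v ↔ (J u ∩ J v).Nonempty)) := by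
  have h2 := atMostTwo_of_triangleFree htf
  obtain ⟨e, he⟩ := Set.countable_iff_exists_injOn.1 V.countable_toSet
  choose k l r hlr hP using exists_place V e
  refine exists_intervals_of_keys V k l r (fun v _ => hlr v) ?_
  intro u hu v hv huv
  have noChain : ∀ w, (Isolated V e w (k w) (l w) (r w) ∨ IsTopVertex V w (k w) (l w) (r w) ∨
      IsBottomVertex V w (k w) (l w) (r w)) → NoChain V w := by
    rintro w (h | h | h) <;> exact h.1
  rcases hP u with cu | pu
  · rcases hP v with cv | pv
    · exact adj_iff_chain_chain h2 he huv cu cv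
    · exact iff_of_false (not_adj_chain_noChain h2 cu (noChain v pv))
        (fun h => key_ne_of_chain he hv cu pv h.1)
  rcases hP v with cv | pv
  · exact iff_of_false (fun h => not_adj_chain_noChain h2 cv (noChain u pu) h.symm)
      (fun h => key_ne_of_chain he hu cv pu h.1.symm)
  rcases pu with iu | pu
  · refine iff_of_false (not_adj_isolated iu) (fun h => ?_)
    have ku := iu.2.2.2.1
    rcases pv with iv | tv | bv
    · have kv := iv.2.2.2.1
      exact huv (he hu hv (by omega))
    · have := tv.2.2
      omega
    · have := bv.2.2
      omega
  rcases pv with iv | pv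
  · refine iff_of_false (fun h => not_adj_isolated iv h.symm) (fun h => ?_)
    have kv := iv.2.2.2.1
    rcases pu with tu | bu
    · have := tu.2.2
      omega
    · have := bu.2.2
      omega
  rcases pu with tu | bu <;> rcases pv with tv | bv
  · exact adj_iff_top_top hu hv huv tu tv
  · refine iff_of_false (not_adj_top_bottom tu bv) (fun h => ?_)
    have := tu.2.2
    have := bv.2.2
    omega
  · refine iff_of_false (fun h => not_adj_top_bottom tv bu h.symm) (fun h => ?_)
    have := tv.2.2
    have := bu.2.2
    omega
  · exact adj_iff_bottom_bottom hu hv huv bu bv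
end
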